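/- Let b be a prime, α ≥ 2 an integer, and n a positive integer. For every real λ > 1/α, Σ_{k ∈ E, b^n | k} b^{−λ μ_α(⌊k/b⌋)} ≤ A₂ / b^{2λn}, where A₂ = (1/(b−1)) Σ_{v=2}^{α−1} ∏_{i=1}^{v} (b^{λ}(b−1))/(b^{λi}−1) + (b^{λ}/(b^{λα}−b)) ∏_{i=1}^{α−1} (b^{λ}(b−1))/(b^{λi}−1). -/

import Mathlib

namespace QMC

/-- the `i`-th `b`-adic digit of `k`. -/
def digit (b k i : ℕ) : ℕ := k / b ^ i % b

/-- `μ_α(k) = a₁ + ⋯ + a_{min(v,α)}`, the sum of the `α` largest positions (counted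
from `1`) of nonzero `b`-adic digits of `k`; `μ_α(0) = 0`. -/
def mualpha (b α k : ℕ) : ℕ :=
  (((((Finset.range (k + 1)).filter fun i => digit b k i ≠ 0).sort (· ≤ ·)).reverse.take
    α).map (· + 1)).sum

/-- the set `E` of positive integers whose `b`-adic digit sum is divisible by `b`. -/
def Eset (b : ℕ) : Set ℕ := {k | k ≠ 0 ∧ (b : ℕ) ∣ (Nat.digits b k).sum}

/-- the constant `A_{α,b,λ,2}`. -/
noncomputable def A2 (b α : ℕ) (lam : ℝ) : ℝ :=
  (1 / ((b : ℝ) - 1)) * ∑ v ∈ Finset.Icc 2 (α - 1), ∏ i ∈ Finset.Icc 1 v,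
      ((b : ℝ) ^ lam * ((b : ℝ) - 1)) / ((b : ℝ) ^ (lam * i) - 1) +
    ((b : ℝ) ^ lam / ((b : ℝ) ^ (lam * α) - b)) *
      ∏ i ∈ Finset.Icc 1 (α - 1), ((b : ℝ) ^ lam * ((b : ℝ) - 1)) / ((b : ℝ) ^ (lam * i) - 1)

/-!
Write `x = b^{-λ}`, `y = b^λ` and `k = b^n t`. Splitting off the leading digit `c` of
`t = b^N c + l`, the remainder `l` leaves at most one choice of `c` with `t ∈ E`, and none if
`l = 0`. The series is therefore at most
`∑_N x^{n+N} ∑_{0 < l < b^N} x^{μ_{α-1}(b^{n-1} l)}`.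
Now the leading position is summed out by a geometric series, which replaces `α` by `α - 1` and the
weight `x^{j(n+N)}` by `x^{(j+1)(n+N)}`, at the cost of a factor `(b-1)/(y^j-1)`. After `v` rounds
these factors make up the products in `A2`; the last round has no digit left to weigh and gives
`1/(1 - b x^α)`, which converges since `λ > 1/α`.
-/

section Digits

variable {b c l q : ℕ}

lemma digit_eq_zero_of_lt_pow {k i : ℕ} (hk : k < b ^ i) : digit b k i = 0 := by
  rw [digit, Nat.div_eq_of_lt hk, Nat.zero_mod]

lemma digit_pow_mul_add_of_lt {i : ℕ} (hb : 0 < b) (hi : i < q) (c l : ℕ) :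
    digit b (b ^ q * c + l) i = digit b l i := by
  obtain ⟨d, rfl⟩ := Nat.exists_eq_add_of_lt hi
  have hfactor : b ^ (i + d + 1) * c + l = b ^ i * (b * (b ^ d * c)) + l := by ring
  rw [digit, digit, hfactor, Nat.mul_add_div (by positivity), Nat.mul_add_mod]

lemma digit_pow_mul_add_self (hc : c < b) (hl : l < b ^ q) :
    digit b (b ^ q * c + l) q = c := by
  rw [digit, Nat.mul_add_div (Nat.zero_lt_of_lt hl), Nat.div_eq_of_lt hl, add_zero,
    Nat.mod_eq_of_lt hc]

lemma pow_mul_add_lt_pow_succ (hc : c < b) (hl : l < b ^ q) :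
    b ^ q * c + l < b ^ (q + 1) :=
  calc b ^ q * c + l < b ^ q * (c + 1) := by rw [mul_add_one]; lia
    _ ≤ b ^ (q + 1) := by rw [pow_succ]; exact Nat.mul_le_mul_left _ hc

lemma sum_digits_pow_mul_add (hb : 1 < b) (hl : l < b ^ q) (c : ℕ) :
    (b.digits (b ^ q * c + l)).sum = (b.digits c).sum + (b.digits l).sum := by
  obtain rfl | hc := c.eq_zero_or_pos
  · simp
  obtain ⟨d, hd⟩ := Nat.exists_eq_add_of_le ((Nat.digits_length_le_iff hb l).2 hl)
  rw [hd, add_comm (_ * c), ← Nat.digits_append_zeroes_append_digits hb hc]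
  simp [add_comm]

/-- The positions, counted from `0`, of the nonzero `b`-adic digits of `k`. The range is wide
enough to contain all of them as soon as `1 < b`. -/
def digitSupport (b k : ℕ) : Finset ℕ := {i ∈ Finset.range (k + 1) | digit b k i ≠ 0}

lemma mem_digitSupport {k i : ℕ} (hb : 1 < b) : i ∈ digitSupport b k ↔ digit b k i ≠ 0 := by
  simp only [digitSupport, Finset.mem_filter, Finset.mem_range, and_iff_right_iff_imp]
  contrapose!
  exact fun hki => digit_eq_zero_of_lt_pow
    ((Nat.lt_of_succ_le hki).trans (Nat.lt_pow_self hb))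

lemma lt_of_mem_digitSupport {k i : ℕ} (hb : 1 < b) (hk : k < b ^ q)
    (hi : i ∈ digitSupport b k) : i < q := by
  by_contra! hqi
  exact (mem_digitSupport hb).1 hi
    (digit_eq_zero_of_lt_pow (hk.trans_le (Nat.pow_le_pow_right hb.le hqi)))

lemma digitSupport_pow_mul_add (hc : 0 < c) (hcb : c < b) (hl : l < b ^ q) :
    digitSupport b (b ^ q * c + l) = insert q (digitSupport b l) := by
  have hb : 1 < b := by lia
  ext i
  rw [Finset.mem_insert, mem_digitSupport hb, mem_digitSupport hb]
  obtain hiq | rfl | hqi := lt_trichotomy i q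
  · rw [digit_pow_mul_add_of_lt hb.le hiq]
    simp [hiq.ne]
  · simp [digit_pow_mul_add_self hcb hl, hc.ne']
  · have hpow {j : ℕ} (hj : j ≤ i) : b ^ j ≤ b ^ i := Nat.pow_le_pow_right hb.le hj
    rw [digit_eq_zero_of_lt_pow ((pow_mul_add_lt_pow_succ hcb hl).trans_le (hpow hqi)),
      digit_eq_zero_of_lt_pow (hl.trans_le (hpow hqi.le))]
    simp [hqi.ne']

end Digits

section Mualpha

lemma reverse_sort_le_eq_sort_ge {ι : Type*} [LinearOrder ι] (s : Finset ι) :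
    (s.sort (· ≤ ·)).reverse = s.sort (· ≥ ·) := by
  refine List.Perm.eq_of_pairwise' (r := (· ≥ ·)) ?_ (Finset.pairwise_sort _ _) ?_
  · exact List.pairwise_reverse.2 (Finset.pairwise_sort s (· ≤ ·))
  · exact (List.reverse_perm _).trans
      ((Finset.sort_perm_toList _ _).trans (Finset.sort_perm_toList _ _).symm)

lemma mualpha_eq_sum_sort_ge (b α k : ℕ) :
    mualpha b α k = ((((digitSupport b k).sort (· ≥ ·)).take α).map (· + 1)).sum := by
  rw [← reverse_sort_le_eq_sort_ge]
  rfl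

@[simp]
lemma mualpha_zero_left (b k : ℕ) : mualpha b 0 k = 0 := by simp [mualpha]

@[simp]
lemma mualpha_zero_right (b α : ℕ) : mualpha b α 0 = 0 := by simp [mualpha, digit]

variable {b c l q : ℕ}

lemma mualpha_succ_pow_mul_add (hc : 0 < c) (hcb : c < b) (hl : l < b ^ q) (β : ℕ) :
    mualpha b (β + 1) (b ^ q * c + l) = q + 1 + mualpha b β l := by
  have hlt : ∀ i ∈ digitSupport b l, i < q := fun _ => lt_of_mem_digitSupport (by lia) hl
  rw [mualpha_eq_sum_sort_ge, mualpha_eq_sum_sort_ge, digitSupport_pow_mul_add hc hcb hl,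
    Finset.sort_insert _ (fun i hi => (hlt i hi).le) fun hq => (hlt q hq).false]
  simp

lemma mualpha_succ_pow_mul_pow_mul_add (hc : 0 < c) (hcb : c < b) (hl : l < b ^ q) (m β : ℕ) :
    mualpha b (β + 1) (b ^ m * (b ^ q * c + l)) = m + 1 + q + mualpha b β (b ^ m * l) := by
  have hlow : b ^ m * l < b ^ (m + q) := by
    rw [pow_add]
    exact Nat.mul_lt_mul_of_pos_left hl (Nat.pow_pos (by lia))
  rw [mul_add, ← mul_assoc, ← pow_add, mualpha_succ_pow_mul_add hc hcb hlow]
  ring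

end Mualpha

section Eset

variable {b c l q : ℕ}

instance (b : ℕ) : DecidablePred (· ∈ Eset b) :=
  fun _ => inferInstanceAs (Decidable (_ ∧ _))

lemma pow_mul_mem_Eset_iff (hb : 1 < b) (n t : ℕ) : b ^ n * t ∈ Eset b ↔ t ∈ Eset b := by
  have hsum := sum_digits_pow_mul_add hb (Nat.pow_pos (n := n) hb.le) t
  rw [add_zero, Nat.digits_zero, List.sum_nil, add_zero] at hsum
  simp [Eset, hsum, Nat.ne_zero_of_lt hb]

lemma pow_mul_add_mem_Eset_iff (hc : 0 < c) (hcb : c < b) (hl : l < b ^ q) :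
    b ^ q * c + l ∈ Eset b ↔ b ∣ c + (b.digits l).sum := by
  simp [Eset, hc.ne', Nat.ne_zero_of_lt hcb, sum_digits_pow_mul_add (by lia) hl,
    Nat.digits_of_lt b c hc.ne' hcb]

lemma pow_mul_notMem_Eset (hc : 0 < c) (hcb : c < b) (q : ℕ) : b ^ q * c ∉ Eset b := by
  rw [← add_zero (b ^ q * c), pow_mul_add_mem_Eset_iff hc hcb (Nat.pow_pos (by lia))]
  simpa using Nat.not_dvd_of_pos_of_lt hc hcb

lemma card_leadingDigit_mem_Eset_le_one (hl : l < b ^ q) :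
    Finset.card {c ∈ Finset.Ico 1 b | b ^ q * c + l ∈ Eset b} ≤ 1 := by
  have hdvd {c : ℕ} (hc : c ∈ Finset.Ico 1 b) (hmem : b ^ q * c + l ∈ Eset b) :
      c + (b.digits l).sum ≡ 0 [MOD b] := by
    rw [Finset.mem_Ico] at hc
    exact (Nat.modEq_zero_iff_dvd).2 ((pow_mul_add_mem_Eset_iff hc.1 hc.2 hl).1 hmem)
  simp only [Finset.card_le_one, Finset.mem_filter]
  rintro c ⟨hc, hcE⟩ d ⟨hd, hdE⟩
  have hcd := Nat.ModEq.add_right_cancel' _ ((hdvd hc hcE).trans (hdvd hd hdE).symm)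
  exact hcd.eq_of_lt_of_lt (Finset.mem_Ico.1 hc).2 (Finset.mem_Ico.1 hd).2

end Eset

section TruncatedSums

lemma sum_range_mul {M : Type*} [AddCommMonoid M] (f : ℕ → M) (B b : ℕ) :
    ∑ t ∈ Finset.range (B * b), f t =
      ∑ c ∈ Finset.range b, ∑ l ∈ Finset.range B, f (B * c + l) := by
  induction b with
  | zero => simp
  | succ b ih => rw [mul_add_one, Finset.sum_range_add, ih, Finset.sum_range_succ]

lemma sum_range_pow_succ {M : Type*} [AddCommMonoid M] {b : ℕ} (hb : 0 < b) (f : ℕ → M) (N : ℕ) :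
    ∑ t ∈ Finset.range (b ^ (N + 1)), f t = ∑ t ∈ Finset.range (b ^ N), f t +
      ∑ c ∈ Finset.Ico 1 b, ∑ l ∈ Finset.range (b ^ N), f (b ^ N * c + l) := by
  rw [pow_succ, sum_range_mul, Finset.range_eq_Ico, Finset.sum_eq_sum_Ico_succ_bot hb]
  simp

/-- The sum `∑_{t < b^N} x^{μ_β(b^m t)}`; in the application `x = b^{-λ}` and `m = n - 1`. -/
def muSum {R : Type*} [CommSemiring R] (b m : ℕ) (x : R) (β N : ℕ) : R :=
  ∑ t ∈ Finset.range (b ^ N), x ^ mualpha b β (b ^ m * t)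

/-- The part of `muSum` coming from `t ∈ E`. -/
def muSumEset {R : Type*} [CommSemiring R] (b m : ℕ) (x : R) (β N : ℕ) : R :=
  ∑ t ∈ Finset.range (b ^ N) with t ∈ Eset b, x ^ mualpha b β (b ^ m * t)

lemma muSum_zero_left {R : Type*} [CommSemiring R] (b m : ℕ) (x : R) (N : ℕ) :
    muSum b m x 0 N = (b : R) ^ N := by
  simp [muSum]

lemma muSum_zero_right {R : Type*} [CommSemiring R] (b m : ℕ) (x : R) (β : ℕ) :
    muSum b m x β 0 = 1 := by
  simp [muSum]

section CommRing

variable {R : Type*} [CommRing R] {b : ℕ} (m : ℕ) (x : R) (β N : ℕ)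

lemma muSum_succ_succ (hb : 0 < b) :
    muSum b m x (β + 1) (N + 1) =
      muSum b m x (β + 1) N + (b - 1) * x ^ (m + 1 + N) * muSum b m x β N := by
  have hleading : ∀ c ∈ Finset.Ico 1 b,
      ∑ l ∈ Finset.range (b ^ N), x ^ mualpha b (β + 1) (b ^ m * (b ^ N * c + l)) =
        x ^ (m + 1 + N) * muSum b m x β N := by
    intro c hc
    rw [Finset.mem_Ico] at hc
    rw [muSum, Finset.mul_sum]
    refine Finset.sum_congr rfl fun l hl => ?_
    rw [mualpha_succ_pow_mul_pow_mul_add hc.1 hc.2 (Finset.mem_range.1 hl), pow_add]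
  rw [muSum, sum_range_pow_succ hb, ← muSum, Finset.sum_congr rfl hleading]
  simp [Nat.cast_sub hb, mul_assoc]

lemma muSum_succ_sub_one (hb : 0 < b) :
    muSum b m x (β + 1) N - 1 =
      ∑ q ∈ Finset.range N, (b - 1) * x ^ (m + 1 + q) * muSum b m x β q := by
  induction N with
  | zero => simp [muSum_zero_right]
  | succ N ih => rw [muSum_succ_succ m x β N hb, Finset.sum_range_succ, ← ih]; ring

lemma muSum_sub_one_eq_sum_Ico (hb : 0 < b) :
    muSum b m x β N - 1 = ∑ l ∈ Finset.Ico 1 (b ^ N), x ^ mualpha b β (b ^ m * l) := by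
  rw [muSum, Finset.range_eq_Ico, Finset.sum_eq_sum_Ico_succ_bot (Nat.pow_pos hb)]
  simp

end CommRing

section OrderedSemiring

variable {R : Type*} [CommSemiring R] [PartialOrder R] [IsOrderedRing R] {b : ℕ} (m : ℕ) {x : R}

lemma muSum_nonneg (b : ℕ) (hx : 0 ≤ x) (β N : ℕ) : 0 ≤ muSum b m x β N :=
  Finset.sum_nonneg fun _ _ => pow_nonneg hx _

lemma sum_leadingDigit_Eset_le {N l : ℕ} (hl : l < b ^ N) (hx : 0 ≤ x) (β : ℕ) :
    (∑ c ∈ Finset.Ico 1 b, if b ^ N * c + l ∈ Eset b then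
      x ^ mualpha b (β + 1) (b ^ m * (b ^ N * c + l)) else 0) ≤
      x ^ (m + 1 + N) * x ^ mualpha b β (b ^ m * l) := by
  have hterm : ∀ c ∈ ({c ∈ Finset.Ico 1 b | b ^ N * c + l ∈ Eset b} : Finset ℕ),
      x ^ mualpha b (β + 1) (b ^ m * (b ^ N * c + l)) ≤
        x ^ (m + 1 + N) * x ^ mualpha b β (b ^ m * l) := by
    intro c hc
    rw [Finset.mem_filter, Finset.mem_Ico] at hc
    rw [mualpha_succ_pow_mul_pow_mul_add hc.1.1 hc.1.2 hl, pow_add]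
  rw [← Finset.sum_filter]
  calc _ ≤ _ := Finset.sum_le_card_nsmul _ _ _ hterm
    _ ≤ 1 • (x ^ (m + 1 + N) * x ^ mualpha b β (b ^ m * l)) :=
        nsmul_le_nsmul_left (by positivity) (card_leadingDigit_mem_Eset_le_one hl)
    _ = _ := one_nsmul _

end OrderedSemiring

section OrderedRing

variable {R : Type*} [CommRing R] [PartialOrder R] [IsOrderedRing R] {b : ℕ} (m : ℕ) {x : R}

lemma muSumEset_succ_succ_le (hb : 0 < b) (hx : 0 ≤ x) (β N : ℕ) :
    muSumEset b m x (β + 1) (N + 1) ≤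
      muSumEset b m x (β + 1) N + x ^ (m + 1 + N) * (muSum b m x β N - 1) := by
  have hpow : 0 < b ^ N := Nat.pow_pos hb
  simp only [muSumEset, Finset.sum_filter]
  rw [sum_range_pow_succ hb, muSum_sub_one_eq_sum_Ico m x β N hb, Finset.sum_comm, Finset.mul_sum,
    Finset.range_eq_Ico, Finset.sum_eq_sum_Ico_succ_bot hpow (fun l => ∑ c ∈ Finset.Ico 1 b, _)]
  gcongr
  have hzero : (∑ c ∈ Finset.Ico 1 b, if b ^ N * c + 0 ∈ Eset b then
      x ^ mualpha b (β + 1) (b ^ m * (b ^ N * c + 0)) else 0) = 0 := by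
    refine Finset.sum_eq_zero fun c hc => if_neg ?_
    rw [Finset.mem_Ico] at hc
    exact pow_mul_notMem_Eset hc.1 hc.2 N
  rw [hzero, zero_add]
  exact Finset.sum_le_sum fun l hl =>
    sum_leadingDigit_Eset_le m (Finset.mem_Ico.1 hl).2 hx β

lemma muSumEset_succ_le_sum (hb : 0 < b) (hx : 0 ≤ x) (β N : ℕ) :
    muSumEset b m x (β + 1) N ≤
      ∑ i ∈ Finset.range N, x ^ (m + 1 + i) * (muSum b m x β i - 1) := by
  induction N with
  | zero => simp [muSumEset, Finset.sum_filter, Eset]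
  | succ N ih =>
    rw [Finset.sum_range_succ]
    exact (muSumEset_succ_succ_le m hb hx β N).trans (by gcongr)

end OrderedRing

end TruncatedSums

section WeightedSums

/-- The sum `∑_{i < N} x^{j(m+1+i)} ∑_{t < b^i} x^{μ_β(b^m t)}`, which arises once the
`j - 1` largest digit positions have been summed out: the `j`-th largest one, `m + 1 + i`, then
carries the weight of all `j`. -/
def weightedMuSum {R : Type*} [CommSemiring R] (b m : ℕ) (x : R) (β j N : ℕ) : R :=
  ∑ i ∈ Finset.range N, x ^ (j * (m + 1 + i)) * muSum b m x β i

lemma one_sub_mul_sum_pow_mul_sum_range {R : Type*} [CommRing R] (r : R) (f : ℕ → R) (N : ℕ) :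
    (1 - r) * ∑ i ∈ Finset.range N, r ^ i * ∑ q ∈ Finset.range i, f q +
      r ^ N * ∑ q ∈ Finset.range N, f q = r * ∑ i ∈ Finset.range N, r ^ i * f i := by
  induction N with
  | zero => simp
  | succ N ih =>
    rw [Finset.sum_range_succ _ N, Finset.sum_range_succ f, Finset.sum_range_succ _ N,
      mul_add r, ← ih]
    ring

variable {K : Type*} [Field K] [LinearOrder K] [IsStrictOrderedRing K]

lemma sum_pow_mul_sum_range_le {r : K} (hr : 0 ≤ r) (hr1 : r < 1) {f : ℕ → K}
    (hf : ∀ i, 0 ≤ f i) (N : ℕ) :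
    ∑ i ∈ Finset.range N, r ^ i * ∑ q ∈ Finset.range i, f q ≤
      r / (1 - r) * ∑ i ∈ Finset.range N, r ^ i * f i := by
  have htail : 0 ≤ r ^ N * ∑ q ∈ Finset.range N, f q :=
    mul_nonneg (pow_nonneg hr N) (Finset.sum_nonneg fun i _ => hf i)
  rw [div_mul_eq_mul_div, le_div_iff₀ (sub_pos.2 hr1), mul_comm,
    ← one_sub_mul_sum_pow_mul_sum_range]
  exact le_add_of_nonneg_right htail

lemma geom_sum_range_le {r : K} (hr : 0 ≤ r) (hr1 : r < 1) (N : ℕ) :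
    ∑ i ∈ Finset.range N, r ^ i ≤ 1 / (1 - r) := by
  simpa using geom_sum_Ico_le_of_lt_one (m := 0) (n := N) hr hr1

variable {b : ℕ} (m : ℕ) {x : K} {j : ℕ}

lemma weightedMuSum_zero_le (hx : 0 ≤ x) (hxj : b * x ^ j < 1) (N : ℕ) :
    weightedMuSum b m x 0 j N ≤ x ^ (j * (m + 1)) / (1 - b * x ^ j) :=
  calc weightedMuSum b m x 0 j N
      = x ^ (j * (m + 1)) * ∑ i ∈ Finset.range N, (b * x ^ j) ^ i := by
        rw [weightedMuSum, Finset.mul_sum]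
        refine Finset.sum_congr rfl fun i _ => ?_
        rw [muSum_zero_left]
        ring
    _ ≤ x ^ (j * (m + 1)) * (1 / (1 - b * x ^ j)) := by
        gcongr
        exact geom_sum_range_le (by positivity) hxj N
    _ = _ := mul_one_div _ _

lemma sum_pow_mul_muSum_succ_sub_one_le (hb : 0 < b) (hx : 0 ≤ x) (hxj : x ^ j < 1) (β N : ℕ) :
    ∑ i ∈ Finset.range N, x ^ (j * (m + 1 + i)) * (muSum b m x (β + 1) i - 1) ≤
      x ^ j / (1 - x ^ j) * ((b - 1) * weightedMuSum b m x β (j + 1) N) := by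
  set f : ℕ → K := fun q => (b - 1) * x ^ (m + 1 + q) * muSum b m x β q
  have hb1 : (0 : K) ≤ b - 1 := sub_nonneg.2 (mod_cast hb)
  have hf : ∀ q, 0 ≤ f q := fun q =>
    mul_nonneg (mul_nonneg hb1 (pow_nonneg hx _)) (muSum_nonneg m b hx β q)
  have hweight : x ^ (j * (m + 1)) * ∑ i ∈ Finset.range N, (x ^ j) ^ i * f i =
      (b - 1) * weightedMuSum b m x β (j + 1) N := by
    rw [weightedMuSum, Finset.mul_sum, Finset.mul_sum]
    refine Finset.sum_congr rfl fun i _ => ?_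
    simp only [f]
    ring
  calc ∑ i ∈ Finset.range N, x ^ (j * (m + 1 + i)) * (muSum b m x (β + 1) i - 1)
      = x ^ (j * (m + 1)) *
          ∑ i ∈ Finset.range N, (x ^ j) ^ i * ∑ q ∈ Finset.range i, f q := by
        rw [Finset.mul_sum]
        refine Finset.sum_congr rfl fun i _ => ?_
        rw [muSum_succ_sub_one m x β i hb]
        ring
    _ ≤ x ^ (j * (m + 1)) *
          (x ^ j / (1 - x ^ j) * ∑ i ∈ Finset.range N, (x ^ j) ^ i * f i) := by
        gcongr
        exact sum_pow_mul_sum_range_le (pow_nonneg hx j) hxj hf N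
    _ = x ^ j / (1 - x ^ j) * ((b - 1) * weightedMuSum b m x β (j + 1) N) := by
        rw [mul_left_comm, hweight]

lemma weightedMuSum_succ_le (hb : 0 < b) (hx : 0 ≤ x) (hxj : x ^ j < 1) (β N : ℕ) :
    weightedMuSum b m x (β + 1) j N ≤ x ^ (j * (m + 1)) / (1 - x ^ j) +
      x ^ j / (1 - x ^ j) * ((b - 1) * weightedMuSum b m x β (j + 1) N) := by
  have hgeom : ∑ i ∈ Finset.range N, x ^ (j * (m + 1 + i)) ≤ x ^ (j * (m + 1)) / (1 - x ^ j) := by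
    simp only [mul_add j, pow_add, pow_mul x j, ← Finset.mul_sum]
    rw [div_eq_mul_one_div]
    gcongr
    exact geom_sum_range_le (pow_nonneg hx j) hxj N
  calc weightedMuSum b m x (β + 1) j N
      = ∑ i ∈ Finset.range N, x ^ (j * (m + 1 + i)) +
          ∑ i ∈ Finset.range N, x ^ (j * (m + 1 + i)) * (muSum b m x (β + 1) i - 1) := by
        rw [weightedMuSum, ← Finset.sum_add_distrib]
        exact Finset.sum_congr rfl fun i _ => by ring
    _ ≤ _ := add_le_add hgeom (sum_pow_mul_muSum_succ_sub_one_le m hb hx hxj β N)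

end WeightedSums

section Constant

variable {K : Type*} [Field K]

/-- The product `∏_{i=1}^{v} y(b-1)/(y^i-1)` occurring in `A2`, where `y = b^λ`. -/
def digitProd (b y : K) (v : ℕ) : K := ∏ i ∈ Finset.Icc 1 v, y * (b - 1) / (y ^ i - 1)

/-- The part of `A2` that starts at `v = k + 1`, for `α = k + β + 1` and `y = b^λ`. -/
def A2Tail (b y : K) (k β : ℕ) : K :=
  1 / (b - 1) * ∑ v ∈ Finset.Ioc k (k + β), digitProd b y v +
    y / (y ^ (k + β + 1) - b) * digitProd b y (k + β)

lemma digitProd_succ (b y : K) (v : ℕ) :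
    digitProd b y (v + 1) = digitProd b y v * (y * (b - 1) / (y ^ (v + 1) - 1)) :=
  Finset.prod_Icc_succ_top (by lia) _

lemma A2Tail_succ (b y : K) (k β : ℕ) :
    A2Tail b y k (β + 1) = 1 / (b - 1) * digitProd b y (k + 1) + A2Tail b y (k + 1) β := by
  have hindex : k + 1 + β = k + (β + 1) := by ring
  rw [A2Tail, A2Tail, hindex, ← Finset.insert_Ioc_add_one_left_eq_Ioc (show k < k + (β + 1) by lia),
    Finset.sum_insert (by simp)]
  ring

variable [LinearOrder K] [IsStrictOrderedRing K] {b y : K}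

lemma digitProd_pos (hb : 1 < b) (hy : 1 < y) (v : ℕ) : 0 < digitProd b y v := by
  refine Finset.prod_pos fun i hi => ?_
  have hyi : 1 < y ^ i := one_lt_pow₀ hy (by grind)
  exact div_pos (mul_pos (by positivity) (sub_pos.2 hb)) (sub_pos.2 hyi)

lemma A2Tail_nonneg (hb : 1 < b) (hy : 1 < y) {k β : ℕ} (hyb : b < y ^ (k + β + 1)) :
    0 ≤ A2Tail b y k β := by
  have hprod (v : ℕ) : 0 ≤ digitProd b y v := (digitProd_pos hb hy v).le
  exact add_nonneg
    (mul_nonneg (one_div_nonneg.2 (sub_nonneg.2 hb.le)) (Finset.sum_nonneg fun v _ => hprod v))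
    (mul_nonneg (div_nonneg (by positivity) (sub_nonneg.2 hyb.le)) (hprod _))

end Constant

section Bounds

lemma div_one_sub_mul_inv {K : Type*} [Field K] {z : K} (hz : z ≠ 0) (a c : K) :
    a / (1 - c * z⁻¹) = a * z / (z - c) := by
  have hdenom : 1 - c * z⁻¹ = (z - c) / z := by field_simp
  rw [hdenom, div_div_eq_mul_div]

variable {K : Type*} [Field K] [LinearOrder K] [IsStrictOrderedRing K] {b : ℕ} {y : K}

lemma digitProd_div_pow_mul_weightedMuSum_zero_le (hb : 1 < b) (hy : 1 < y) (m N : ℕ) {k : ℕ}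
    (hyb : b < y ^ (k + 1)) :
    digitProd (b : K) y k / y ^ k * weightedMuSum b m y⁻¹ 0 (k + 1) N ≤
      y⁻¹ ^ ((k + 1) * (m + 1)) * A2Tail (b : K) y k 0 := by
  have hP := digitProd_pos (Nat.one_lt_cast.2 hb) hy k
  have hby : b * y⁻¹ ^ (k + 1) < 1 := by
    rwa [inv_pow, ← div_eq_mul_inv, div_lt_one (by positivity)]
  calc digitProd (b : K) y k / y ^ k * weightedMuSum b m y⁻¹ 0 (k + 1) N
      ≤ digitProd (b : K) y k / y ^ k *
          (y⁻¹ ^ ((k + 1) * (m + 1)) / (1 - b * y⁻¹ ^ (k + 1))) := by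
        gcongr
        exact weightedMuSum_zero_le m (by positivity) hby N
    _ = y⁻¹ ^ ((k + 1) * (m + 1)) * A2Tail (b : K) y k 0 := by
        rw [inv_pow y (k + 1), div_one_sub_mul_inv (by positivity), A2Tail]
        simp only [add_zero, Finset.Ioc_self, Finset.sum_empty, mul_zero, zero_add]
        field_simp
        ring

lemma digitProd_div_pow_mul_weightedMuSum_succ_le (hb : 1 < b) (hy : 1 < y) (m N β k : ℕ) :
    digitProd (b : K) y k / y ^ k * weightedMuSum b m y⁻¹ (β + 1) (k + 1) N ≤
      y⁻¹ ^ ((k + 1) * (m + 1)) * (1 / (b - 1) * digitProd (b : K) y (k + 1)) +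
        digitProd (b : K) y (k + 1) / y ^ (k + 1) * weightedMuSum b m y⁻¹ β (k + 2) N := by
  have hb1 : (1 : K) < b := Nat.one_lt_cast.2 hb
  have hP := digitProd_pos hb1 hy k
  have hxk : y⁻¹ ^ (k + 1) < 1 :=
    pow_lt_one₀ (by positivity) (inv_lt_one_of_one_lt₀ hy) k.succ_ne_zero
  refine (mul_le_mul_of_nonneg_left
    (weightedMuSum_succ_le m (by lia) (by positivity) hxk β N) (by positivity)).trans_eq ?_
  have hgeom (a : K) : a / (1 - y⁻¹ ^ (k + 1)) = a * y ^ (k + 1) / (y ^ (k + 1) - 1) := by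
    simpa using div_one_sub_mul_inv (pow_ne_zero (k + 1) (by positivity : y ≠ 0)) a 1
  rw [hgeom, hgeom, digitProd_succ, inv_pow y (k + 1)]
  have hbne : (b : K) - 1 ≠ 0 := (sub_pos.2 hb1).ne'
  have hyne : y ^ (k + 1) - 1 ≠ 0 := (sub_pos.2 (one_lt_pow₀ hy k.succ_ne_zero)).ne'
  field_simp
  ring

lemma digitProd_div_pow_mul_weightedMuSum_le (hb : 1 < b) (hy : 1 < y) (m N β : ℕ) {k : ℕ}
    (hyb : b < y ^ (k + β + 1)) :
    digitProd (b : K) y k / y ^ k * weightedMuSum b m y⁻¹ β (k + 1) N ≤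
      y⁻¹ ^ ((k + 1) * (m + 1)) * A2Tail (b : K) y k β := by
  induction β generalizing k with
  | zero => exact digitProd_div_pow_mul_weightedMuSum_zero_le hb hy m N hyb
  | succ β ih =>
    have hyb' : b < y ^ (k + 1 + β + 1) := by rwa [show k + 1 + β = k + (β + 1) by ring]
    have hpow : y⁻¹ ^ ((k + 1 + 1) * (m + 1)) ≤ y⁻¹ ^ ((k + 1) * (m + 1)) :=
      pow_le_pow_of_le_one (by positivity) (inv_le_one_of_one_le₀ hy.le) (by gcongr; lia)
    have htail := A2Tail_nonneg (Nat.one_lt_cast.2 hb) hy hyb'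
    rw [A2Tail_succ, mul_add]
    refine (digitProd_div_pow_mul_weightedMuSum_succ_le hb hy m N β k).trans ?_
    exact add_le_add_right ((ih hyb').trans (mul_le_mul_of_nonneg_right hpow htail)) _

lemma muSumEset_le (hb : 1 < b) (hy : 1 < y) (m β N : ℕ) (hyb : b < y ^ (β + 2)) :
    muSumEset b m y⁻¹ (β + 2) N ≤ y⁻¹ ^ (2 * (m + 1)) * A2Tail (b : K) y 1 β := by
  have hx : 0 ≤ y⁻¹ := by positivity
  have hx1 : y⁻¹ ^ 1 < 1 := by simpa using inv_lt_one_of_one_lt₀ hy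
  calc muSumEset b m y⁻¹ (β + 2) N
      ≤ ∑ i ∈ Finset.range N, y⁻¹ ^ (1 * (m + 1 + i)) * (muSum b m y⁻¹ (β + 1) i - 1) := by
        simpa only [one_mul] using muSumEset_succ_le_sum m hb.le hx (β + 1) N
    _ ≤ y⁻¹ ^ 1 / (1 - y⁻¹ ^ 1) * ((b - 1) * weightedMuSum b m y⁻¹ β (1 + 1) N) :=
        sum_pow_mul_muSum_succ_sub_one_le m hb.le hx hx1 β N
    _ = digitProd (b : K) y 1 / y ^ 1 * weightedMuSum b m y⁻¹ β (1 + 1) N := by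
        have hy0 : y ≠ 0 := by positivity
        have hgeom := div_one_sub_mul_inv hy0 y⁻¹ 1
        rw [one_mul] at hgeom
        simp only [digitProd, pow_one, Finset.Icc_self, Finset.prod_singleton, hgeom]
        field_simp
    _ ≤ y⁻¹ ^ (2 * (m + 1)) * A2Tail (b : K) y 1 β :=
        digitProd_div_pow_mul_weightedMuSum_le hb hy m N β
          (by rwa [show 1 + β + 1 = β + 2 by ring])

end Bounds

section Series

lemma A2_add_two (b β : ℕ) (lam : ℝ) :
    A2 b (β + 2) lam = A2Tail (b : ℝ) ((b : ℝ) ^ lam) 1 β := by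
  have hrpow (i : ℕ) : (b : ℝ) ^ (lam * i) = ((b : ℝ) ^ lam) ^ i :=
    Real.rpow_mul_natCast b.cast_nonneg lam i
  have hindex : β + 2 - 1 = 1 + β := by lia
  have hIcc : Finset.Icc 2 (1 + β) = Finset.Ioc 1 (1 + β) := Finset.Icc_add_one_left_eq_Ioc 1 _
  simp only [A2, A2Tail, digitProd, hrpow, hindex, hIcc]
  ring_nf

lemma summable_and_tsum_subtype_le_of_sum_range_pow_le {b : ℕ} (hb : 1 < b) {s : Set ℕ}
    [DecidablePred (· ∈ s)] {f : ℕ → ℝ} (hf : ∀ t, 0 ≤ f t) {C : ℝ}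
    (hC : ∀ N, ∑ t ∈ Finset.range (b ^ N) with t ∈ s, f t ≤ C) :
    Summable (fun t : s => f t) ∧ ∑' t : s, f t ≤ C := by
  have hfinite (u : Finset s) : ∑ t ∈ u, f t ≤ C := by
    obtain ⟨N, hN⟩ := (u.map (Function.Embedding.subtype _)).exists_nat_subset_range
    refine (Finset.sum_map u (Function.Embedding.subtype _) f).symm.trans_le ?_
    refine (Finset.sum_le_sum_of_subset_of_nonneg (fun t ht => ?_) fun t _ _ => hf t).trans (hC N)
    refine Finset.mem_filter.2 ⟨?_, Finset.property_of_mem_map_subtype u ht⟩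
    exact Finset.mem_range.2 ((Finset.mem_range.1 (hN ht)).trans (Nat.lt_pow_self hb))
  have hsummable := summable_of_sum_le (fun t : s => hf t) hfinite
  exact ⟨hsummable, hsummable.tsum_le_of_sum_le hfinite⟩

/-- Multiplication by `b ^ n` identifies `E` with the elements of `E` divisible by `b ^ n`. -/
noncomputable def EsetEquivDvd {b : ℕ} (hb : 1 < b) (n : ℕ) :
    Eset b ≃ {k : ℕ // k ∈ Eset b ∧ b ^ n ∣ k} :=
  Equiv.ofBijective
    (fun t => ⟨b ^ n * t, (pow_mul_mem_Eset_iff hb n t).2 t.2, Nat.dvd_mul_right _ _⟩) <| by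
    constructor
    · intro s t hst
      exact Subtype.ext (Nat.eq_of_mul_eq_mul_left (Nat.pow_pos hb.le) (Subtype.ext_iff.1 hst))
    · rintro ⟨_, hk, t, rfl⟩
      exact ⟨⟨t, (pow_mul_mem_Eset_iff hb n t).1 hk⟩, rfl⟩

lemma rpow_neg_mul_mualpha_EsetEquivDvd {b : ℕ} (hb : 1 < b) (α m : ℕ) (lam : ℝ) (t : Eset b) :
    (b : ℝ) ^ (-(lam * (mualpha b α ((EsetEquivDvd hb (m + 1) t).1 / b) : ℝ))) =
      ((b : ℝ) ^ lam)⁻¹ ^ mualpha b α (b ^ m * t) := by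
  have hdiv : (EsetEquivDvd hb (m + 1) t).1 / b = b ^ m * t := by
    change b ^ (m + 1) * t / b = b ^ m * t
    rw [pow_succ', mul_assoc, Nat.mul_div_cancel_left _ (by lia)]
  rw [hdiv, Real.rpow_neg b.cast_nonneg, Real.rpow_mul_natCast b.cast_nonneg, inv_pow]

end Series

theorem sum_Eset_dvd_le_general (b α n : ℕ) (hb : 2 ≤ b) (hα : 2 ≤ α) (hn : 0 < n) (lam : ℝ)
    (hlam : 1 / (α : ℝ) < lam) :
    Summable (fun k : {k : ℕ // k ∈ Eset b ∧ b ^ n ∣ k} =>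
      (b : ℝ) ^ (-(lam * (mualpha b α (k.1 / b) : ℝ)))) ∧
      ∑' k : {k : ℕ // k ∈ Eset b ∧ b ^ n ∣ k},
          (b : ℝ) ^ (-(lam * (mualpha b α (k.1 / b) : ℝ))) ≤
        A2 b α lam / (b : ℝ) ^ (2 * lam * n) := by
  obtain ⟨β, rfl⟩ := Nat.exists_eq_add_of_le' hα
  obtain ⟨m, rfl⟩ := Nat.exists_eq_add_of_le' hn
  have hb1 : (1 : ℝ) < b := Nat.one_lt_cast.2 hb
  have hy : 1 < (b : ℝ) ^ lam := Real.one_lt_rpow hb1 (lt_trans (by positivity) hlam)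
  have hyb : (b : ℝ) < ((b : ℝ) ^ lam) ^ (β + 2) := by
    rw [← Real.rpow_mul_natCast b.cast_nonneg]
    exact Real.self_lt_rpow_of_one_lt hb1 ((div_lt_iff₀ (by positivity)).1 hlam)
  have hconst : A2 b (β + 2) lam / (b : ℝ) ^ (2 * lam * (m + 1 : ℕ)) =
      ((b : ℝ) ^ lam)⁻¹ ^ (2 * (m + 1)) * A2Tail (b : ℝ) ((b : ℝ) ^ lam) 1 β := by
    rw [A2_add_two, mul_comm 2 lam, mul_assoc, ← Nat.cast_two (R := ℝ), ← Nat.cast_mul,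
      Real.rpow_mul_natCast b.cast_nonneg, inv_pow, div_eq_inv_mul]
  rw [← (EsetEquivDvd hb (m + 1)).summable_iff, ← (EsetEquivDvd hb (m + 1)).tsum_eq, hconst]
  simp only [Function.comp_def, rpow_neg_mul_mualpha_EsetEquivDvd]
  exact summable_and_tsum_subtype_le_of_sum_range_pow_le hb
    (f := fun t => ((b : ℝ) ^ lam)⁻¹ ^ mualpha b (β + 2) (b ^ m * t)) (fun t => by positivity)
    fun N => muSumEset_le hb hy m β N hyb

/-- For every `λ > 1/α`, `Σ_{k ∈ E, bⁿ ∣ k} b^{-λ μ_α(⌊k/b⌋)} ≤ A_{α,b,λ,2} / b^{2λn}`. -/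
theorem sum_Eset_dvd_le (b α n : ℕ) (hb : b.Prime) (hα : 2 ≤ α) (hn : 0 < n) (lam : ℝ)
    (hlam : 1 / (α : ℝ) < lam) :
    Summable (fun k : {k : ℕ // k ∈ Eset b ∧ b ^ n ∣ k} =>
      (b : ℝ) ^ (-(lam * (mualpha b α (k.1 / b) : ℝ)))) ∧
      ∑' k : {k : ℕ // k ∈ Eset b ∧ b ^ n ∣ k},
          (b : ℝ) ^ (-(lam * (mualpha b α (k.1 / b) : ℝ))) ≤
        A2 b α lam / (b : ℝ) ^ (2 * lam * n) := by
  exact sum_Eset_dvd_le_general b α n hb.two_le hα hn lam hlam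

end QMC
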